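/- A pair (b, i) of nonnegative integers equals (b(P), i(P)) for some lattice polygon P if and only if (i = 0 and b ≥ 3), or (i ≥ 1 and 3 ≤ b ≤ 2i + 6), or (b, i) = (9, 1). -/

import Mathlib

open MeasureTheory

/-- The point of `ℝ²` corresponding to an integer point. -/
def toR2 (z : ℤ × ℤ) : ℝ × ℝ := ((z.1 : ℝ), (z.2 : ℝ))

/-- A lattice polygon: a two-dimensional convex hull of finitely many integer points. -/
def IsLatticePolygon (P : Set (ℝ × ℝ)) : Prop :=
  ∃ S : Finset (ℤ × ℤ), P = convexHull ℝ (toR2 '' (S : Set (ℤ × ℤ))) ∧ affineSpan ℝ P = ⊤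

/-- A lattice triangle: the convex hull of three affinely independent integer points. -/
def IsLatticeTriangle (T : Set (ℝ × ℝ)) : Prop :=
  ∃ v0 v1 v2 : ℤ × ℤ, AffineIndependent ℝ ![toR2 v0, toR2 v1, toR2 v2] ∧
    T = convexHull ℝ {toR2 v0, toR2 v1, toR2 v2}

/-- The number of lattice points on the boundary. -/
noncomputable def bcount (P : Set (ℝ × ℝ)) : ℕ :=
  Set.ncard {z : ℤ × ℤ | toR2 z ∈ frontier P}

/-- The number of lattice points in the interior. -/
noncomputable def icount (P : Set (ℝ × ℝ)) : ℕ :=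
  Set.ncard {z : ℤ × ℤ | toR2 z ∈ interior P}

/-- The Euclidean area. -/
noncomputable def area (P : Set (ℝ × ℝ)) : ℝ := (volume P).toReal



/-- A nonzero functional bounded above on `P` is strict in the interior. -/
lemma support_not_interior {P : Set (ℝ × ℝ)} (a b c : ℝ) (hab : a ≠ 0 ∨ b ≠ 0)
    (h : ∀ z ∈ P, a * z.1 + b * z.2 ≤ c) {z : ℝ × ℝ} (hz : z ∈ interior P) :
    a * z.1 + b * z.2 < c := by
  have hpos : 0 < a * a + b * b := by
    rcases hab with h | h
    · have := mul_self_pos.mpr h; nlinarith [mul_self_nonneg b]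
    · have := mul_self_pos.mpr h; nlinarith [mul_self_nonneg a]
  have hcont : Continuous (fun e : ℝ => ((z.1 + e * a, z.2 + e * b) : ℝ × ℝ)) := by fun_prop
  have hmem : (fun e : ℝ => ((z.1 + e * a, z.2 + e * b) : ℝ × ℝ)) ⁻¹' P ∈ nhds (0 : ℝ) := by
    apply hcont.continuousAt.preimage_mem_nhds
    simpa using mem_interior_iff_mem_nhds.mp hz
  obtain ⟨ε, hε, hb⟩ := Metric.mem_nhds_iff.mp hmem
  have hh : (ε / 2) ∈ Metric.ball (0 : ℝ) ε := by
    simp [abs_of_pos hε]; exact hε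
  have := h _ (hb hh)
  simp only at this
  nlinarith [mul_pos hε hpos]

lemma clm_prod_apply (f : (ℝ × ℝ) →L[ℝ] ℝ) (z : ℝ × ℝ) :
    f z = f (1, 0) * z.1 + f (0, 1) * z.2 := by
  have : z = z.1 • ((1 : ℝ), (0 : ℝ)) + z.2 • ((0 : ℝ), (1 : ℝ)) := by
    ext <;> simp
  conv_lhs => rw [this]
  rw [map_add, map_smul, map_smul, smul_eq_mul, smul_eq_mul]; ring

lemma mem_interior_of_rows {P : Set (ℝ × ℝ)} (hc : Convex ℝ P) (hi : (interior P).Nonempty)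
    {l r x y a y0 c y1 : ℝ} (hl : (l, y) ∈ P) (hr : (r, y) ∈ P) (h0 : (a, y0) ∈ P)
    (h1 : (c, y1) ∈ P) (hlx : l < x) (hxr : x < r) (hy0 : y0 < y) (hy1 : y < y1) :
    (x, y) ∈ interior P := by
  by_contra hn
  obtain ⟨f, hf⟩ := geometric_hahn_banach_open_point hc.interior isOpen_interior hn
  have hle : ∀ z ∈ P, f z ≤ f (x, y) := by
    intro z hz
    have hz' : z ∈ closure (interior P) := by
      rw [hc.closure_interior_eq_closure_of_nonempty_interior hi]
      exact subset_closure hz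
    have hcl : IsClosed {w | f w ≤ f (x, y)} := isClosed_le f.continuous continuous_const
    exact closure_minimal (fun w hw => (hf w hw).le) hcl hz'
  obtain ⟨w, hw⟩ := hi
  have hw := hf w hw
  have e1 := hle _ hl
  have e2 := hle _ hr
  have e3 := hle _ h0
  have e4 := hle _ h1
  rw [clm_prod_apply f w, clm_prod_apply f (x, y)] at hw
  rw [clm_prod_apply f (_, _), clm_prod_apply f (x, y)] at e1 e2 e3 e4
  simp only at e1 e2 e3 e4 hw
  have u0 : f (1, 0) = 0 := by
    apply le_antisymm
    · by_contra h; push Not at h; nlinarith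
    · by_contra h; push Not at h; nlinarith
  rw [u0] at e1 e2 e3 e4 hw
  have v0 : f (0, 1) = 0 := by
    apply le_antisymm
    · by_contra h; push Not at h; nlinarith
    · by_contra h; push Not at h; nlinarith
  rw [v0] at hw
  simp at hw

lemma affineSpan_top_of_three {P : Set (ℝ × ℝ)} (A B C : ℝ × ℝ) (hA : A ∈ P) (hB : B ∈ P)
    (hC : C ∈ P)
    (hd : (B.1 - A.1) * (C.2 - A.2) - (B.2 - A.2) * (C.1 - A.1) ≠ 0) :
    affineSpan ℝ P = ⊤ := by
  rw [eq_top_iff]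
  intro q _
  have hA := subset_affineSpan ℝ P hA
  have hB := subset_affineSpan ℝ P hB
  have hC := subset_affineSpan ℝ P hC
  set D := (B.1 - A.1) * (C.2 - A.2) - (B.2 - A.2) * (C.1 - A.1) with hD
  have h1 := AffineSubspace.smul_vsub_vadd_mem _
    (((B.1 - A.1) * (q.2 - A.2) - (B.2 - A.2) * (q.1 - A.1)) / D) hC hA hA
  have h2 := AffineSubspace.smul_vsub_vadd_mem _
    (((q.1 - A.1) * (C.2 - A.2) - (q.2 - A.2) * (C.1 - A.1)) / D) hB hA h1
  convert h2 using 1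
  ext
  · simp
    field_simp
    rw [hD]; ring
  · simp
    field_simp
    rw [hD]; ring

lemma trap {h : ℕ} {A B : ℝ} (g : ℕ → ℝ)
    (hg : ∀ k ≤ h, (h : ℝ) * A + (B - A) * k ≤ h * g k) :
    (h : ℝ) * (A + B) ≤ ∑ k ∈ Finset.range h, (g k + g (k + 1)) := by
  rcases Nat.eq_zero_or_pos h with rfl | hpos
  · simp
  have hp : (0 : ℝ) < h := by exact_mod_cast hpos
  have e : ∀ n : ℕ, ∑ k ∈ Finset.range n, (2 * ((h : ℝ) * A) + (B - A) * (2 * k + 1))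
      = 2 * n * (h * A) + (B - A) * n ^ 2 := by
    intro n
    induction n with
    | zero => simp
    | succ m ih => rw [Finset.sum_range_succ, ih]; push_cast; ring
  have : ∑ k ∈ Finset.range h, (2 * ((h : ℝ) * A) + (B - A) * (2 * k + 1))
      ≤ ∑ k ∈ Finset.range h, h * (g k + g (k + 1)) := by
    apply Finset.sum_le_sum
    intro k hk
    have hk := Finset.mem_range.mp hk
    have h1 := hg k (by omega)
    have h2 := hg (k + 1) (by omega)
    push_cast at h2
    linarith
  rw [e, ← Finset.mul_sum] at this
  have h3 : (h : ℝ) * (h * (A + B)) ≤ h * ∑ k ∈ Finset.range h, (g k + g (k + 1)) := by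
    refine le_trans (le_of_eq ?_) this; ring
  exact le_of_mul_le_mul_left h3 hp

lemma tent {p h : ℕ} (hp : h ≤ p) {D : ℝ} (g : ℕ → ℝ)
    (h1 : ∀ k ≤ h, D * k ≤ h * g k)
    (h2 : ∀ k, h ≤ k → k ≤ p → D * ((p : ℝ) - k) ≤ ((p : ℝ) - h) * g k) :
    (p : ℝ) * D ≤ ∑ k ∈ Finset.range p, (g k + g (k + 1)) := by
  obtain ⟨m, rfl⟩ := Nat.exists_eq_add_of_le hp
  rw [Finset.sum_range_add]
  have a1 := trap (h := h) (A := 0) (B := D) g (by intro k hk; have := h1 k hk; linarith)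
  have a2 := trap (h := m) (A := D) (B := 0) (fun k => g (h + k)) (by
    intro k hk; have := h2 (h + k) (by omega) (by omega); push_cast at this; linarith)
  push_cast
  simp only [add_assoc] at a2 ⊢
  linarith

lemma shear_exists {A s p : ℝ} (hs : 0 ≤ s) (hp : 0 < p) (hsp : s ≤ p) :
    ∃ (t : ℤ) (e : ℝ), A ≤ e ∧ e ≤ A + s ∧ |e - t * p| ≤ (p - s) / 2 := by
  have f1 := Int.floor_le (A / p)
  have f2 := Int.lt_floor_add_one (A / p)
  set t := ⌊A / p⌋
  rw [le_div_iff₀ hp] at f1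
  rw [div_lt_iff₀ hp] at f2
  by_cases c1 : A - t * p ≤ (p - s) / 2
  · exact ⟨t, A, le_rfl, by linarith, abs_le.mpr ⟨by linarith, c1⟩⟩
  push Not at c1
  by_cases c2 : (t + 1) * p ≤ A + s
  · exact ⟨t + 1, (t + 1) * p, by linarith, c2, by push_cast; simp; linarith⟩
  push Not at c2
  refine ⟨t + 1, A + s, by linarith, le_rfl, abs_le.mpr ⟨?_, ?_⟩⟩ <;> push_cast <;> linarith

lemma lattice_finite {P : Set (ℝ × ℝ)} (hP : IsCompact P) : {z : ℤ × ℤ | toR2 z ∈ P}.Finite := by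
  obtain ⟨R, hR⟩ := hP.isBounded.subset_closedBall 0
  apply (Set.finite_Icc ((-⌈R⌉, -⌈R⌉) : ℤ × ℤ) (⌈R⌉, ⌈R⌉)).subset
  intro z hz
  have h := hR hz
  rw [mem_closedBall_zero_iff, Prod.norm_def, max_le_iff] at h
  simp only [toR2, Real.norm_eq_abs, abs_le] at h
  obtain ⟨⟨h1, h2⟩, h3, h4⟩ := h
  have hc := Int.le_ceil R
  refine ⟨⟨?_, ?_⟩, ?_, ?_⟩ <;> simp only <;> rify <;> linarith

lemma row_point {P : Set (ℝ × ℝ)} (hc : Convex ℝ P) {a u b v k : ℝ} (hA : (a, u) ∈ P)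
    (hB : (b, v) ∈ P) (hk1 : u ≤ k) (hk2 : k ≤ v) (huv : u < v) :
    (((v - k) * a + (k - u) * b) / (v - u), k) ∈ P := by
  have hpos : 0 < v - u := by linarith
  have := hc hA hB (a := (v - k) / (v - u)) (b := (k - u) / (v - u))
    (div_nonneg (by linarith) hpos.le) (div_nonneg (by linarith) hpos.le)
    (by field_simp; ring)
  convert this using 1
  ext
  · simp; field_simp
  · simp; field_simp; ring

lemma row_lower {P : Set (ℝ × ℝ)} (hc : Convex ℝ P) {a u b v k l : ℝ} (hA : (a, u) ∈ P)
    (hB : (b, v) ∈ P) (hk1 : u ≤ k) (hk2 : k ≤ v) (hl : ∀ x, (x, k) ∈ P → l ≤ x) :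
    (v - u) * l ≤ (v - k) * a + (k - u) * b := by
  rcases eq_or_lt_of_le (hk1.trans hk2) with h | h
  · have h1 : k = u := by linarith
    subst h1; subst h; simp
  · have := hl _ (row_point hc hA hB hk1 hk2 h)
    rw [le_div_iff₀ (by linarith)] at this
    linarith

lemma row_upper {P : Set (ℝ × ℝ)} (hc : Convex ℝ P) {a u b v k r : ℝ} (hA : (a, u) ∈ P)
    (hB : (b, v) ∈ P) (hk1 : u ≤ k) (hk2 : k ≤ v) (hr : ∀ x, (x, k) ∈ P → x ≤ r) :
    (v - k) * a + (k - u) * b ≤ (v - u) * r := by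
  rcases eq_or_lt_of_le (hk1.trans hk2) with h | h
  · have h1 : k = u := by linarith
    subst h1; subst h; simp
  · have := hr _ (row_point hc hA hB hk1 hk2 h)
    rw [div_le_iff₀ (by linarith)] at this
    linarith

/-- The area estimate: twice the trapezoid sum of the row lengths. -/
lemma area_bound {P : Set (ℝ × ℝ)} (hc : Convex ℝ P) {p : ℕ} (hp : 0 < p) (l r : ℕ → ℝ)
    (hl : ∀ k ≤ p, (l k, (k : ℝ)) ∈ P) (hr : ∀ k ≤ p, (r k, (k : ℝ)) ∈ P)
    (hlr : ∀ k ≤ p, ∀ x, (x, (k : ℝ)) ∈ P → l k ≤ x ∧ x ≤ r k)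
    (hw : ∀ t : ℤ, ∃ (y y' : ℝ) (h h' : ℕ), h ≤ p ∧ h' ≤ p ∧ (y, (h : ℝ)) ∈ P ∧
      (y', (h' : ℝ)) ∈ P ∧ (∀ z ∈ P, y - t * h ≤ z.1 - t * z.2 ∧ z.1 - t * z.2 ≤ y' - t * h') ∧
      (p : ℝ) ≤ (y' - t * h') - (y - t * h))
    (hs : (r 0 - l 0) + (r p - l p) ≤ p) :
    (p : ℝ) * ((p + ((r 0 - l 0) + (r p - l p))) / 2) ≤
      ∑ k ∈ Finset.range p, ((r k - l k) + (r (k + 1) - l (k + 1))) := by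
  have hpR : (0 : ℝ) < p := by exact_mod_cast hp
  have s0 := (hlr 0 (by omega) _ (hl 0 (by omega))).2
  have s1 := (hlr p le_rfl _ (hl p le_rfl)).2
  obtain ⟨t, e, he1, he2, he3⟩ := shear_exists (A := l p - r 0)
    (s := (r 0 - l 0) + (r p - l p)) (p := p) (by linarith) hpR hs
  obtain ⟨x', x, hx', hx, hxx⟩ : ∃ x' x, (l 0 ≤ x' ∧ x' ≤ r 0) ∧ (l p ≤ x ∧ x ≤ r p) ∧
      x - x' = e := by
    by_cases h : e ≤ l p - l 0
    · exact ⟨l p - e, l p, ⟨by linarith, by linarith⟩, ⟨le_rfl, s1⟩, by ring⟩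
    · push Not at h
      exact ⟨l 0, l 0 + e, ⟨le_rfl, s0⟩, ⟨by linarith, by linarith⟩, by ring⟩
  have seg : ∀ k ≤ p, ∀ x, l k ≤ x → x ≤ r k → (x, (k : ℝ)) ∈ P := by
    intro k hk x h1 h2
    rcases eq_or_lt_of_le (h1.trans h2) with h | h
    · have : x = l k := by linarith
      rw [this]; exact hl k hk
    · have hpos : 0 < r k - l k := by linarith
      have := hc (hl k hk) (hr k hk) (a := (r k - x) / (r k - l k))
        (b := (x - l k) / (r k - l k))
        (div_nonneg (by linarith) hpos.le) (div_nonneg (by linarith) hpos.le)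
        (by field_simp; ring)
      convert this using 1
      ext
      · simp; field_simp; ring
      · simp; field_simp; ring
  have mx' := seg 0 (by omega) x' hx'.1 hx'.2
  have mx := seg p le_rfl x hx.1 hx.2
  obtain ⟨y, y', h, h', hh, hh', my, my', hyz, hpw⟩ := hw t
  obtain ⟨β, hβ⟩ : ∃ β : ℝ, x = x' + β * p := ⟨(x - x') / p, by field_simp; ring⟩
  have hhR : (h : ℝ) ≤ p := by exact_mod_cast hh
  have hhR' : (h' : ℝ) ≤ p := by exact_mod_cast hh'
  have t1 := tent hh (D := x' + β * h - y) (fun k => x' + β * k - l k)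
    (by
      intro k hk
      have := row_lower hc mx' my (k := k) (by simp) (by exact_mod_cast hk)
        (fun z hz => (hlr k (by omega) z hz).1)
      push_cast at this
      linarith)
    (by
      intro k hk hk'
      have := row_lower hc my mx (k := k) (by exact_mod_cast hk) (by exact_mod_cast hk')
        (fun z hz => (hlr k (by omega) z hz).1)
      rw [hβ] at this
      linarith)
  have t2 := tent hh' (D := y' - (x' + β * h')) (fun k => r k - (x' + β * k))
    (by
      intro k hk
      have := row_upper hc mx' my' (k := k) (by simp) (by exact_mod_cast hk)
        (fun z hz => (hlr k (by omega) z hz).2)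
      push_cast at this
      linarith)
    (by
      intro k hk hk'
      have := row_upper hc my' mx (k := k) (by exact_mod_cast hk) (by exact_mod_cast hk')
        (fun z hz => (hlr k (by omega) z hz).2)
      rw [hβ] at this
      linarith)
  have hsum : ∑ k ∈ Finset.range p, ((r k - l k) + (r (k + 1) - l (k + 1))) =
      ∑ k ∈ Finset.range p, ((x' + β * k - l k) + (x' + β * ((k + 1 : ℕ) : ℝ) - l (k + 1))) +
      ∑ k ∈ Finset.range p,
        ((r k - (x' + β * k)) + (r (k + 1) - (x' + β * ((k + 1 : ℕ) : ℝ)))) := by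
    rw [← Finset.sum_add_distrib]
    apply Finset.sum_congr rfl
    intro k _; ring
  rw [hsum]
  have key : (p + ((r 0 - l 0) + (r p - l p))) / 2 ≤
      (x' + β * h - y) + (y' - (x' + β * h')) := by
    have hb : |(β - t) * p| ≤ (p - ((r 0 - l 0) + (r p - l p))) / 2 := by
      convert he3 using 2; rw [← hxx, hβ]; ring
    have hb2 : |(β - t) * (h - h')| ≤ |(β - t) * p| := by
      rw [abs_mul, abs_mul]
      apply mul_le_mul_of_nonneg_left _ (abs_nonneg _)
      rw [abs_of_pos hpR, abs_le]
      have := Nat.cast_nonneg (α := ℝ) h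
      have := Nat.cast_nonneg (α := ℝ) h'
      constructor <;> linarith
    have := neg_abs_le ((β - t) * ((h : ℝ) - h'))
    linarith
  have := mul_le_mul_of_nonneg_left key hpR.le
  linarith

lemma card_Icc_le (l r : ℝ) (h : l ≤ r) : ((Finset.Icc ⌈l⌉ ⌊r⌋).card : ℝ) ≤ r - l + 1 := by
  rw [Int.card_Icc]
  have h1 := Int.le_ceil l
  have h2 := Int.floor_le r
  rcases le_total 0 (⌊r⌋ + 1 - ⌈l⌉) with h3 | h3
  · have : (((⌊r⌋ + 1 - ⌈l⌉).toNat : ℤ) : ℝ) = ((⌊r⌋ + 1 - ⌈l⌉ : ℤ) : ℝ) := by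
      rw [Int.toNat_of_nonneg h3]
    push_cast at this
    rw [this]; linarith
  · rw [Int.toNat_of_nonpos h3]; simp; linarith

lemma le_card_Icc (l r : ℝ) : r - l - 1 ≤ ((Finset.Icc (⌊l⌋ + 1) (⌈r⌉ - 1)).card : ℝ) := by
  rw [Int.card_Icc]
  have h1 := Int.floor_le l
  have h2 := Int.le_ceil r
  have h3 := Int.self_le_toNat (⌈r⌉ - 1 + 1 - (⌊l⌋ + 1))
  have h4 : ((⌈r⌉ - 1 + 1 - (⌊l⌋ + 1) : ℤ) : ℝ) ≤
    (((⌈r⌉ - 1 + 1 - (⌊l⌋ + 1)).toNat : ℤ) : ℝ) := by exact_mod_cast h3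
  push_cast at h4
  linarith

lemma ncard_rows {A : Set (ℤ × ℤ)} (hA : A.Finite) (p : ℕ)
    (h : ∀ z ∈ A, 0 ≤ z.2 ∧ z.2 ≤ p) :
    A.ncard = ∑ k ∈ Finset.range (p + 1), (hA.toFinset.filter (fun z => z.2 = (k : ℤ))).card := by
  rw [Set.ncard_eq_toFinset_card A hA,
    Finset.card_eq_sum_card_fiberwise (f := fun z => z.2.toNat) (t := Finset.range (p + 1))]
  · apply Finset.sum_congr rfl
    intro k _
    congr 1
    apply Finset.filter_congr
    intro z hz
    have := h z (by simpa using hz)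
    omega
  · intro z hz
    have := h z (by simpa using hz)
    simp; omega

lemma core {P : Set (ℝ × ℝ)} (hc : Convex ℝ P) (hcp : IsCompact P) {p : ℕ}
    (hbox : ∀ z ∈ P, 0 ≤ z.2 ∧ z.2 ≤ (p : ℝ))
    (hbot : ∃ x, (x, (0 : ℝ)) ∈ P) (htop : ∃ x, (x, (p : ℝ)) ∈ P)
    (hw : ∀ t : ℤ, ∃ (y y' : ℝ) (h h' : ℕ), h ≤ p ∧ h' ≤ p ∧ (y, (h : ℝ)) ∈ P ∧
      (y', (h' : ℝ)) ∈ P ∧ (∀ z ∈ P, y - t * h ≤ z.1 - t * z.2 ∧ z.1 - t * z.2 ≤ y' - t * h') ∧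
      (p : ℝ) ≤ (y' - t * h') - (y - t * h))
    (hi : 1 ≤ icount P) :
    bcount P ≤ 2 * icount P + 6 ∨ (bcount P = 9 ∧ icount P = 1) := by
  have hcl := hcp.isClosed
  have hfr : frontier P ⊆ P := hcl.frontier_subset
  have finB : {z : ℤ × ℤ | toR2 z ∈ frontier P}.Finite :=
    (lattice_finite hcp).subset (fun z hz => hfr hz)
  have finI : {z : ℤ × ℤ | toR2 z ∈ interior P}.Finite :=
    (lattice_finite hcp).subset (fun z hz => (interior_subset (s := P) hz : toR2 z ∈ P))
  have hne : {z : ℤ × ℤ | toR2 z ∈ interior P}.Nonempty := by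
    rw [← Set.ncard_pos finI]; exact hi
  obtain ⟨z0, hz0⟩ := hne
  have hin : (interior P).Nonempty := ⟨_, hz0⟩
  have hp2 : 2 ≤ p := by
    have a1 := support_not_interior 0 1 p (by simp) (fun z hz => by
      have := (hbox z hz).2; linarith) hz0
    have a2 := support_not_interior 0 (-1) 0 (by simp) (fun z hz => by
      have := (hbox z hz).1; linarith) hz0
    simp only [toR2] at a1 a2
    have a3 : z0.2 < (p : ℤ) := by rify; linarith
    have a4 : 0 < z0.2 := by rify; linarith
    omega
  have hpR : (2 : ℝ) ≤ p := by exact_mod_cast hp2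
  obtain ⟨xb, hxb⟩ := hbot
  obtain ⟨xt, hxt⟩ := htop
  have hrow : ∀ k : ℕ, ∃ l r : ℝ, k ≤ p → (l, (k : ℝ)) ∈ P ∧ (r, (k : ℝ)) ∈ P ∧
      ∀ x, (x, (k : ℝ)) ∈ P → l ≤ x ∧ x ≤ r := by
    intro k
    by_cases hk : k ≤ p
    · have hkR : (k : ℝ) ≤ p := by exact_mod_cast hk
      have hne : (P ∩ {z | z.2 = (k : ℝ)}).Nonempty :=
        ⟨_, row_point hc hxb hxt (k := k) (by simp) hkR (by linarith), rfl⟩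
      have hcomp : IsCompact (P ∩ {z | z.2 = (k : ℝ)}) :=
        hcp.inter_right (isClosed_eq continuous_snd continuous_const)
      obtain ⟨a, ⟨ha, ha'⟩, hamin⟩ := hcomp.exists_isMinOn hne continuous_fst.continuousOn
      obtain ⟨b, ⟨hb, hb'⟩, hbmax⟩ := hcomp.exists_isMaxOn hne continuous_fst.continuousOn
      refine ⟨a.1, b.1, fun _ => ⟨?_, ?_, ?_⟩⟩
      · rw [← (show a.2 = (k : ℝ) from ha')]; exact ha
      · rw [← (show b.2 = (k : ℝ) from hb')]; exact hb
      · intro x hx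
        exact ⟨hamin ⟨hx, rfl⟩, hbmax ⟨hx, rfl⟩⟩
    · exact ⟨0, 0, fun h => absurd h hk⟩
  choose l r hlr0 using hrow
  have hl : ∀ k ≤ p, (l k, (k : ℝ)) ∈ P := fun k hk => (hlr0 k hk).1
  have hr : ∀ k ≤ p, (r k, (k : ℝ)) ∈ P := fun k hk => (hlr0 k hk).2.1
  have hlr : ∀ k ≤ p, ∀ x, (x, (k : ℝ)) ∈ P → l k ≤ x ∧ x ≤ r k := fun k hk => (hlr0 k hk).2.2
  have hle : ∀ k ≤ p, l k ≤ r k := fun k hk => (hlr k hk _ (hl k hk)).2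
  have zbox : ∀ z : ℤ × ℤ, toR2 z ∈ P → 0 ≤ z.2 ∧ z.2 ≤ p := by
    intro z hz
    have := hbox _ hz
    simp only [toR2] at this
    constructor
    · rify; exact this.1
    · rify; exact this.2
  have hB := ncard_rows finB p (fun z hz => zbox z (hfr hz))
  have hI := ncard_rows finI p (fun z hz => zbox z (interior_subset (s := P) hz))
  set FB : ℕ → ℕ := fun k => (finB.toFinset.filter (fun z => z.2 = (k : ℤ))).card with hFB
  set FI : ℕ → ℕ := fun k => (finI.toFinset.filter (fun z => z.2 = (k : ℤ))).card with hFI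
  have inter : ∀ k, 0 < k → k < p → ∀ x, l k < x → x < r k → (x, (k : ℝ)) ∈ interior P := by
    intro k hk hkp x h1 h2
    exact mem_interior_of_rows hc hin (hl k hkp.le) (hr k hkp.le) hxb hxt h1 h2
      (by exact_mod_cast hk) (by exact_mod_cast hkp)
  have FB2 : ∀ k, 0 < k → k < p → FB k ≤ 2 := by
    intro k hk hkp
    refine le_trans (Finset.card_le_card (t := {(⌊l k⌋, (k : ℤ)), (⌊r k⌋, (k : ℤ))}) ?_)
      Finset.card_le_two
    intro z hz
    simp only [Finset.mem_filter, Set.Finite.mem_toFinset, Set.mem_ofPred_eq] at hz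
    obtain ⟨hz1, hz2⟩ := hz
    have hz3 : toR2 z = ((z.1 : ℝ), (k : ℝ)) := by simp [toR2, hz2]
    rw [hz3] at hz1
    have hb := hlr k hkp.le _ (hfr hz1)
    have hni : ((z.1 : ℝ), (k : ℝ)) ∉ interior P := hz1.2
    have : (z.1 : ℝ) = l k ∨ (z.1 : ℝ) = r k := by
      by_contra hcon
      push Not at hcon
      exact hni (inter k hk hkp _ (lt_of_le_of_ne hb.1 hcon.1.symm)
        (lt_of_le_of_ne hb.2 hcon.2))
    rcases this with h | h
    · rw [← h]; simp [← hz2]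
    · rw [← h]; simp [← hz2]
  have FBend : ∀ k ≤ p, (FB k : ℝ) ≤ r k - l k + 1 := by
    intro k hk
    refine le_trans ?_ (card_Icc_le (l k) (r k) (hle k hk))
    have : FB k ≤ ((Finset.Icc ⌈l k⌉ ⌊r k⌋).image (fun x => (x, (k : ℤ)))).card := by
      apply Finset.card_le_card
      intro z hz
      simp only [Finset.mem_filter, Set.Finite.mem_toFinset, Set.mem_ofPred_eq] at hz
      obtain ⟨hz1, hz2⟩ := hz
      have hz3 : toR2 z = ((z.1 : ℝ), (k : ℝ)) := by simp [toR2, hz2]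
      rw [hz3] at hz1
      have hb := hlr k hk _ (hfr hz1)
      rw [Finset.mem_image]
      refine ⟨z.1, ?_, by rw [← hz2]⟩
      rw [Finset.mem_Icc]
      exact ⟨Int.ceil_le.mpr hb.1, Int.le_floor.mpr hb.2⟩
    exact_mod_cast this.trans Finset.card_image_le
  have FIge : ∀ k, 0 < k → k < p → r k - l k - 1 ≤ (FI k : ℝ) := by
    intro k hk hkp
    refine le_trans (le_card_Icc (l k) (r k)) ?_
    have hinj : Function.Injective (fun x : ℤ => (x, (k : ℤ))) := fun a b h => by
      simpa using h
    rw [← Finset.card_image_of_injective _ hinj]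
    norm_cast
    apply Finset.card_le_card
    intro z hz
    rw [Finset.mem_image] at hz
    obtain ⟨x, hx, rfl⟩ := hz
    rw [Finset.mem_Icc] at hx
    simp only [Finset.mem_filter, Set.Finite.mem_toFinset, Set.mem_ofPred_eq, and_true]
    have := inter k hk hkp x (Int.floor_lt.mp (by omega)) (Int.lt_ceil.mp (by omega))
    simpa [toR2] using this
  obtain ⟨n, rfl⟩ : ∃ n, p = n + 2 := ⟨p - 2, by omega⟩
  set s := (r 0 - l 0) + (r (n + 2) - l (n + 2)) with hsdef
  have hs0 : 0 ≤ s := by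
    have := hle 0 (by omega); have := hle (n + 2) le_rfl; linarith
  have eB : (bcount P : ℝ) =
      ∑ k ∈ Finset.range (n + 1), (FB (k + 1) : ℝ) + FB 0 + FB (n + 2) := by
    have : bcount P = ∑ k ∈ Finset.range (n + 2 + 1), FB k := hB
    rw [this, Finset.sum_range_succ, Finset.sum_range_succ']
    push_cast; ring
  have eI : ∑ k ∈ Finset.range (n + 1), (FI (k + 1) : ℝ) ≤ (icount P : ℝ) := by
    have : icount P = ∑ k ∈ Finset.range (n + 2 + 1), FI k := hI
    rw [this, Finset.sum_range_succ FI, Finset.sum_range_succ' FI]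
    push_cast
    have := Nat.cast_nonneg (α := ℝ) (FI 0)
    have := Nat.cast_nonneg (α := ℝ) (FI (n + 2))
    linarith
  have b0 := FBend 0 (by omega)
  have b1 := FBend (n + 2) le_rfl
  have bmid : ∑ k ∈ Finset.range (n + 1), (FB (k + 1) : ℝ) ≤ 2 * (n + 1) := by
    have : ∑ k ∈ Finset.range (n + 1), (FB (k + 1) : ℝ) ≤ ∑ k ∈ Finset.range (n + 1), (2 : ℝ) := by
      apply Finset.sum_le_sum
      intro k hk
      have := Finset.mem_range.mp hk
      exact_mod_cast FB2 (k + 1) (by omega) (by omega)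
    simp at this; linarith
  have imid : ∑ k ∈ Finset.range (n + 1), (r (k + 1) - l (k + 1)) - (n + 1) ≤
      ∑ k ∈ Finset.range (n + 1), (FI (k + 1) : ℝ) := by
    have : ∑ k ∈ Finset.range (n + 1), (r (k + 1) - l (k + 1) - 1) ≤
        ∑ k ∈ Finset.range (n + 1), (FI (k + 1) : ℝ) := by
      apply Finset.sum_le_sum
      intro k hk
      have := Finset.mem_range.mp hk
      exact FIge (k + 1) (by omega) (by omega)
    rw [Finset.sum_sub_distrib] at this
    simp at this
    simpa using this
  have eT : ∑ k ∈ Finset.range (n + 2), ((r k - l k) + (r (k + 1) - l (k + 1))) =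
      2 * ∑ k ∈ Finset.range (n + 1), (r (k + 1) - l (k + 1)) + s := by
    rw [Finset.sum_add_distrib, Finset.sum_range_succ' (fun k => r k - l k) (n + 1),
      Finset.sum_range_succ (fun k => r (k + 1) - l (k + 1)) (n + 1)]
    rw [hsdef]; ring
  have master : (bcount P : ℝ) - 2 * icount P ≤ 2 * s + 4 * n + 6 -
      ∑ k ∈ Finset.range (n + 2), ((r k - l k) + (r (k + 1) - l (k + 1))) := by
    rw [eT, eB]
    linarith
  have hn0 : (0 : ℝ) ≤ n := Nat.cast_nonneg n
  have fin : (bcount P : ℝ) - 2 * icount P ≤ 6 →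
      bcount P ≤ 2 * icount P + 6 := by
    intro h
    have : (bcount P : ℝ) ≤ 2 * icount P + 6 := by linarith
    exact_mod_cast this
  by_cases c1 : n = 0 ∨ 4 ≤ s
  · left; apply fin
    have tr := trap (h := n + 2) (A := r 0 - l 0) (B := r (n + 2) - l (n + 2))
      (fun k => r k - l k) (by
        intro k hk
        have hkR : (k : ℝ) ≤ ((n + 2 : ℕ) : ℝ) := by exact_mod_cast hk
        have u1 := row_lower hc (hl 0 (by omega)) (hl (n + 2) le_rfl) (k := k) (by simp) hkR
          (fun z hz => (hlr k hk z hz).1)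
        have u2 := row_upper hc (hr 0 (by omega)) (hr (n + 2) le_rfl) (k := k) (by simp) hkR
          (fun z hz => (hlr k hk z hz).2)
        push_cast at u1 u2 ⊢
        linarith)
    push_cast at tr
    have : 0 ≤ (n : ℝ) * (s - 4) := by
      rcases c1 with h | h
      · rw [h]; simp
      · exact mul_nonneg hn0 (by linarith)
    have e : (n + 2 : ℝ) * (r 0 - l 0 + (r (n + 2) - l (n + 2))) = (n + 2) * s := by rw [hsdef]
    rw [e] at tr
    linarith
  push Not at c1
  by_cases c2 : n = 1
  · have : (bcount P : ℝ) < 10 := by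
      rw [eB]
      rw [c2] at bmid
      simp only [c2] at *
      norm_num at *
      linarith [c1]
    have : bcount P < 10 := by exact_mod_cast this
    omega
  left; apply fin
  have hn2 : (2 : ℝ) ≤ n := by
    have : 2 ≤ n := by have := c1.1; omega
    exact_mod_cast this
  have ab := area_bound hc (p := n + 2) (by omega) l r hl hr hlr hw (by push_cast; linarith)
  have e : ((n + 2 : ℕ) : ℝ) * ((((n + 2 : ℕ) : ℝ) + (r 0 - l 0 + (r (n + 2) - l (n + 2)))) / 2)
    = (n + 2) * ((n + 2 + s) / 2) := by push_cast; rw [hsdef]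
  rw [e] at ab
  nlinarith [mul_nonneg (show (0 : ℝ) ≤ n - 2 by linarith) hs0, sq_nonneg ((n:ℝ) - 2)]

lemma hull_le {S : Set (ℤ × ℤ)} (a b c : ℝ) (h : ∀ z ∈ S, a * (z.1 : ℝ) + b * (z.2 : ℝ) ≤ c) :
    ∀ z ∈ convexHull ℝ (toR2 '' S), a * z.1 + b * z.2 ≤ c := by
  have hconv : Convex ℝ {z : ℝ × ℝ | a * z.1 + b * z.2 ≤ c} := by
    intro z hz w hw α β hα hβ hab
    have hz : a * z.1 + b * z.2 ≤ c := hz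
    have hw : a * w.1 + b * w.2 ≤ c := hw
    have h1 := mul_le_mul_of_nonneg_left hz hα
    have h2 := mul_le_mul_of_nonneg_left hw hβ
    have h3 : α * c + β * c = c := by rw [← add_mul, hab, one_mul]
    change a * (α • z + β • w).1 + b * (α • z + β • w).2 ≤ c
    simp only [Prod.fst_add, Prod.snd_add, Prod.smul_fst, Prod.smul_snd, smul_eq_mul]
    linarith
  intro z hz
  have hsub : convexHull ℝ (toR2 '' S) ⊆ {z : ℝ × ℝ | a * z.1 + b * z.2 ≤ c} := by
    apply convexHull_min _ hconv
    rintro _ ⟨w, hw, rfl⟩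
    exact h w hw
  exact hsub hz

/-- A unimodular affine map of the plane. -/
def uniMap (a b u v m : ℤ) (h : u * a + v * b = 1) : (ℝ × ℝ) ≃ₜ (ℝ × ℝ) where
  toFun z := (v * z.1 - u * z.2, a * z.1 + b * z.2 - m)
  invFun z := (b * z.1 + u * (z.2 + m), -a * z.1 + v * (z.2 + m))
  left_inv z := by
    have hR : (u : ℝ) * a + v * b = 1 := by exact_mod_cast h
    ext
    · simp only; linear_combination z.1 * hR
    · simp only; linear_combination z.2 * hR
  right_inv z := by
    have hR : (u : ℝ) * a + v * b = 1 := by exact_mod_cast h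
    ext
    · simp only; linear_combination z.1 * hR
    · simp only; linear_combination (z.2 + m) * hR
  continuous_toFun := by fun_prop
  continuous_invFun := by fun_prop

/-- The same map on integer points. -/
def uniMapZ (a b u v m : ℤ) (h : u * a + v * b = 1) : (ℤ × ℤ) ≃ (ℤ × ℤ) where
  toFun z := (v * z.1 - u * z.2, a * z.1 + b * z.2 - m)
  invFun z := (b * z.1 + u * (z.2 + m), -a * z.1 + v * (z.2 + m))
  left_inv z := by
    ext
    · simp only; linear_combination z.1 * h
    · simp only; linear_combination z.2 * h
  right_inv z := by
    ext
    · simp only; linear_combination z.1 * h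
    · simp only; linear_combination (z.2 + m) * h

lemma uniMap_toR2 (a b u v m : ℤ) (h : u * a + v * b = 1) (z : ℤ × ℤ) :
    uniMap a b u v m h (toR2 z) = toR2 (uniMapZ a b u v m h z) := by
  simp [uniMap, uniMapZ, toR2]

lemma toR2_injective : Function.Injective toR2 := by
  intro z w h
  simp only [toR2, Prod.mk.injEq, Int.cast_inj] at h
  exact Prod.ext h.1 h.2

lemma uniMap_ncard (a b u v m : ℤ) (h : u * a + v * b = 1) (F : Set (ℝ × ℝ)) :
    Set.ncard {z : ℤ × ℤ | toR2 z ∈ uniMap a b u v m h '' F} =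
      Set.ncard {z : ℤ × ℤ | toR2 z ∈ F} := by
  rw [← Set.ncard_image_of_injective {z : ℤ × ℤ | toR2 z ∈ F} (uniMapZ a b u v m h).injective]
  congr 1
  ext z
  constructor
  · rintro ⟨w, hw, hwz⟩
    refine ⟨(uniMapZ a b u v m h).symm z, ?_, by simp⟩
    have : w = toR2 ((uniMapZ a b u v m h).symm z) := by
      apply (uniMap a b u v m h).injective
      rw [hwz, uniMap_toR2]; simp
    change toR2 ((uniMapZ a b u v m h).symm z) ∈ F
    rw [← this]; exact hw
  · rintro ⟨w, hw, rfl⟩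
    exact ⟨toR2 w, hw, uniMap_toR2 a b u v m h w⟩

lemma uniMap_convex (a b u v m : ℤ) (h : u * a + v * b = 1) {P : Set (ℝ × ℝ)}
    (hP : Convex ℝ P) : Convex ℝ (uniMap a b u v m h '' P) := by
  rintro _ ⟨z, hz, rfl⟩ _ ⟨w, hw, rfl⟩ α β hα hβ hab
  refine ⟨α • z + β • w, hP hz hw hα hβ hab, ?_⟩
  have hm : (m : ℝ) = α * m + β * m := by rw [← add_mul, hab, one_mul]
  ext
  · simp [uniMap]; ring
  · simp [uniMap]; linear_combination -hm

lemma upper_bound {P : Set (ℝ × ℝ)} (hP : IsLatticePolygon P) (hi : 1 ≤ icount P) :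
    bcount P ≤ 2 * icount P + 6 ∨ (bcount P = 9 ∧ icount P = 1) := by
  obtain ⟨S, rfl, -⟩ := hP
  set P := convexHull ℝ (toR2 '' (S : Set (ℤ × ℤ))) with hPdef
  have hconv : Convex ℝ P := convex_convexHull ℝ _
  have hcomp : IsCompact P := (S.finite_toSet.image toR2).isCompact_convexHull (𝕜 := ℝ)
  have hS : S.Nonempty := by
    rw [Finset.nonempty_iff_ne_empty]
    rintro rfl
    simp [hPdef, icount] at hi
  have hSP : ∀ z ∈ S, toR2 z ∈ P := fun z hz => subset_convexHull ℝ _ ⟨z, hz, rfl⟩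
  have ext : ∀ a b : ℤ, ∃ y ∈ S, ∃ y' ∈ S, ∀ z ∈ S,
      a * y.1 + b * y.2 ≤ a * z.1 + b * z.2 ∧ a * z.1 + b * z.2 ≤ a * y'.1 + b * y'.2 := by
    intro a b
    obtain ⟨y, hy, h1⟩ := S.exists_min_image (fun z => a * z.1 + b * z.2) hS
    obtain ⟨y', hy', h2⟩ := S.exists_max_image (fun z => a * z.1 + b * z.2) hS
    exact ⟨y, hy, y', hy', fun z hz => ⟨h1 z hz, h2 z hz⟩⟩
  let Q : ℕ → Prop := fun n => ∃ a b : ℤ, IsCoprime a b ∧ ∃ y ∈ S, ∃ y' ∈ S, (∀ z ∈ S,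
      a * y.1 + b * y.2 ≤ a * z.1 + b * z.2 ∧ a * z.1 + b * z.2 ≤ a * y'.1 + b * y'.2) ∧
      (a * y'.1 + b * y'.2) - (a * y.1 + b * y.2) = n
  have hQ : ∀ a b : ℤ, IsCoprime a b → ∀ y ∈ S, ∀ y' ∈ S, (∀ z ∈ S,
      a * y.1 + b * y.2 ≤ a * z.1 + b * z.2 ∧ a * z.1 + b * z.2 ≤ a * y'.1 + b * y'.2) →
      Q ((a * y'.1 + b * y'.2) - (a * y.1 + b * y.2)).toNat := by
    intro a b hab y hy y' hy' h
    refine ⟨a, b, hab, y, hy, y', hy', h, ?_⟩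
    have := (h y hy).2
    rw [Int.toNat_of_nonneg (by linarith)]
  have hex : ∃ n, Q n := by
    obtain ⟨y, hy, y', hy', h⟩ := ext 0 1
    exact ⟨_, hQ 0 1 isCoprime_one_right y hy y' hy' h⟩
  classical
  obtain ⟨p, hp, hmin⟩ : ∃ p, Q p ∧ ∀ n, Q n → p ≤ n :=
    ⟨Nat.find hex, Nat.find_spec hex, fun n hn => Nat.find_min' hex hn⟩
  obtain ⟨a, b, hab, y0, hy0, y1, hy1, hy, hpeq⟩ := hp
  obtain ⟨u, v, huv⟩ := hab
  set m := a * y0.1 + b * y0.2 with hm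
  set G := uniMap a b u v m huv with hG
  have hGt : ∀ z, toR2 z ∈ P → toR2 (uniMapZ a b u v m huv z) ∈ G '' P :=
    fun z hz => ⟨toR2 z, hz, uniMap_toR2 a b u v m huv z⟩
  have eb : bcount (G '' P) = bcount P := by
    unfold bcount
    rw [← G.image_frontier]; exact uniMap_ncard a b u v m huv _
  have ei : icount (G '' P) = icount P := by
    unfold icount
    rw [← G.image_interior]; exact uniMap_ncard a b u v m huv _
  rw [← eb, ← ei]
  have hi' : 1 ≤ icount (G '' P) := ei ▸ hi
  have hpeqR : (a : ℝ) * y1.1 + b * y1.2 - m = p := by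
    have : ((a * y1.1 + b * y1.2 - m : ℤ) : ℝ) = ((p : ℤ) : ℝ) := by rw [hpeq]
    push_cast at this; exact this
  have hmR : (m : ℝ) = a * y0.1 + b * y0.2 := by rw [hm]; push_cast; rfl
  apply core (p := p) (uniMap_convex a b u v m huv hconv) (hcomp.image G.continuous)
  · rintro _ ⟨z, hz, rfl⟩
    have h1 := hull_le (S := S) (-a) (-b) (-m) (by
      intro z hz
      have := (hy z hz).1
      have : (m : ℝ) ≤ a * z.1 + b * z.2 := by exact_mod_cast this
      linarith) z hz
    have h2 := hull_le (S := S) a b (m + p) (by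
      intro z hz
      have := (hy z hz).2
      have : (a : ℝ) * z.1 + b * z.2 ≤ a * y1.1 + b * y1.2 := by exact_mod_cast this
      linarith) z hz
    change 0 ≤ (a : ℝ) * z.1 + b * z.2 - m ∧ (a : ℝ) * z.1 + b * z.2 - m ≤ p
    constructor <;> linarith
  · refine ⟨v * y0.1 - u * y0.2, toR2 y0, hSP _ hy0, ?_⟩
    ext
    · simp [uniMap, toR2]
    · simp [uniMap, toR2, hmR]
  · refine ⟨v * y1.1 - u * y1.2, toR2 y1, hSP _ hy1, ?_⟩
    ext
    · simp [uniMap, toR2]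
    · simp [uniMap, toR2, hpeqR]
  · intro t
    obtain ⟨y, hyS, y', hyS', hyy⟩ := ext (v - t * a) (-u - t * b)
    have hcop : IsCoprime (v - t * a) (-u - t * b) :=
      ⟨b, -a, by linear_combination huv⟩
    have hpm := hmin _ (hQ _ _ hcop y hyS y' hyS' hyy)
    have hnn := (hyy y hyS).2
    have hpm2 : (p : ℤ) ≤ (v - t * a) * y'.1 + (-u - t * b) * y'.2 -
        ((v - t * a) * y.1 + (-u - t * b) * y.2) := by omega
    have hpm3 : (p : ℝ) ≤ (v - t * a) * y'.1 + (-u - t * b) * y'.2 -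
        ((v - t * a) * y.1 + (-u - t * b) * y.2) := by exact_mod_cast hpm2
    have hh : ∀ z ∈ S, ∃ k : ℕ, k ≤ p ∧ (k : ℝ) = a * z.1 + b * z.2 - m := by
      intro z hz
      have h1 := hy z hz
      have h2 := Int.toNat_of_nonneg (show 0 ≤ a * z.1 + b * z.2 - m by linarith)
      refine ⟨(a * z.1 + b * z.2 - m).toNat, by omega, ?_⟩
      have : (((a * z.1 + b * z.2 - m).toNat : ℤ) : ℝ) = ((a * z.1 + b * z.2 - m : ℤ) : ℝ) := by
        rw [h2]
      push_cast at this; exact this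
    obtain ⟨h, hhp, hhe⟩ := hh y hyS
    obtain ⟨h', hhp', hhe'⟩ := hh y' hyS'
    refine ⟨v * y.1 - u * y.2, v * y'.1 - u * y'.2, h, h', hhp, hhp', ?_, ?_, ?_, ?_⟩
    · rw [hhe]; exact ⟨toR2 y, hSP _ hyS, rfl⟩
    · rw [hhe']; exact ⟨toR2 y', hSP _ hyS', rfl⟩
    · rintro _ ⟨z, hz, rfl⟩
      have h1 := hull_le (S := S) (-(v - t * a)) (-(-u - t * b))
        (-((v - t * a) * y.1 + (-u - t * b) * y.2)) (by
          intro z hz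
          have := (hyy z hz).1
          have : ((v : ℝ) - t * a) * y.1 + (-u - t * b) * y.2 ≤
            (v - t * a) * z.1 + (-u - t * b) * z.2 := by exact_mod_cast this
          linarith) z hz
      have h2 := hull_le (S := S) (v - t * a) (-u - t * b)
        ((v - t * a) * y'.1 + (-u - t * b) * y'.2) (by
          intro z hz
          have := (hyy z hz).2
          exact_mod_cast this) z hz
      rw [hhe, hhe']
      change _ ≤ (v : ℝ) * z.1 - u * z.2 - t * (a * z.1 + b * z.2 - m) ∧
        (v : ℝ) * z.1 - u * z.2 - t * (a * z.1 + b * z.2 - m) ≤ _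
      constructor <;> linarith
    · rw [hhe, hhe']; linarith
  · exact hi'

lemma three_le_bcount {P : Set (ℝ × ℝ)} (hP : IsLatticePolygon P) : 3 ≤ bcount P := by
  obtain ⟨S, hPS, htop⟩ := hP
  have hconv : Convex ℝ P := hPS ▸ convex_convexHull ℝ _
  have hcomp : IsCompact P := hPS ▸ (S.finite_toSet.image toR2).isCompact_convexHull (𝕜 := ℝ)
  have hcl := hcomp.isClosed
  have hfr : frontier P ⊆ P := hcl.frontier_subset
  have finB : {z : ℤ × ℤ | toR2 z ∈ frontier P}.Finite :=
    (lattice_finite hcomp).subset (fun z hz => hfr hz)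
  by_contra hlt
  push Not at hlt
  have hext : P.extremePoints ℝ ⊆ toR2 '' {z : ℤ × ℤ | toR2 z ∈ frontier P} := by
    intro z hz
    have h1 : z ∈ toR2 '' (S : Set (ℤ × ℤ)) := by
      rw [hPS] at hz; exact extremePoints_convexHull_subset hz
    obtain ⟨w, hw, rfl⟩ := h1
    refine ⟨w, ?_, rfl⟩
    refine ⟨subset_closure hz.1, fun hzint => ?_⟩
    exact Set.disjoint_left.mp (disjoint_interior_extremePoints P) hzint hz
  have hsub : P ⊆ convexHull ℝ (toR2 '' {z : ℤ × ℤ | toR2 z ∈ frontier P}) := by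
    refine (closure_convexHull_extremePoints hcomp hconv).symm.subset.trans ?_
    exact closure_minimal (convexHull_mono hext)
      ((finB.image toR2).isCompact_convexHull ℝ).isClosed
  have hspan : affineSpan ℝ (toR2 '' {z : ℤ × ℤ | toR2 z ∈ frontier P}) = ⊤ := by
    rw [← affineSpan_convexHull, eq_top_iff, ← htop]
    exact affineSpan_mono ℝ hsub
  obtain ⟨A, B, hAB⟩ : ∃ A B : ℝ × ℝ,
      toR2 '' {z : ℤ × ℤ | toR2 z ∈ frontier P} ⊆ {A, B} := by
    have : bcount P = 0 ∨ bcount P = 1 ∨ bcount P = 2 := by omega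
    rcases this with h | h | h
    · rw [bcount, Set.ncard_eq_zero finB] at h
      rw [h]; exact ⟨0, 0, by simp⟩
    · rw [bcount, Set.ncard_eq_one] at h
      obtain ⟨z, h⟩ := h
      rw [h]; exact ⟨toR2 z, 0, by simp⟩
    · rw [bcount, Set.ncard_eq_two] at h
      obtain ⟨z, w, -, h⟩ := h
      rw [h]; exact ⟨toR2 z, toR2 w, by simp [Set.image_pair]⟩
  have hcol : Collinear ℝ ({A, B} : Set (ℝ × ℝ)) := collinear_pair ℝ A B
  have hAtop : affineSpan ℝ ({A, B} : Set (ℝ × ℝ)) = ⊤ := by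
    rw [eq_top_iff, ← hspan]; exact affineSpan_mono ℝ hAB
  have hfin := hcol.finrank_le_one
  rw [← direction_affineSpan, hAtop, AffineSubspace.direction_top, finrank_top,
    Module.finrank_prod] at hfin
  simp at hfin

lemma hullZ_le {S : Finset (ℤ × ℤ)} (a b c : ℤ) (h : ∀ w ∈ S, a * w.1 + b * w.2 ≤ c)
    {z : ℤ × ℤ} (hz : toR2 z ∈ convexHull ℝ (toR2 '' (S : Set (ℤ × ℤ)))) :
    a * z.1 + b * z.2 ≤ c := by
  have := hull_le (S := S) a b c (fun w hw => by exact_mod_cast h w hw) _ hz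
  simp only [toR2] at this
  exact_mod_cast this

lemma hullZ_not_interior {S : Finset (ℤ × ℤ)} (a b c : ℤ) (hab : a ≠ 0 ∨ b ≠ 0)
    (h : ∀ w ∈ S, a * w.1 + b * w.2 ≤ c) {z : ℤ × ℤ} (hz : a * z.1 + b * z.2 = c) :
    toR2 z ∉ interior (convexHull ℝ (toR2 '' (S : Set (ℤ × ℤ)))) := by
  intro hin
  have := support_not_interior (a : ℝ) b c (by exact_mod_cast hab)
    (hull_le (S := S) a b c (fun w hw => by exact_mod_cast h w hw)) hin
  simp only [toR2] at this
  have : a * z.1 + b * z.2 < c := by exact_mod_cast this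
  omega

lemma row_memZ {P : Set (ℝ × ℝ)} (hc : Convex ℝ P) {k1 k2 k y : ℤ} (h1 : toR2 (k1, y) ∈ P)
    (h2 : toR2 (k2, y) ∈ P) (hk1 : k1 ≤ k) (hk2 : k ≤ k2) : toR2 (k, y) ∈ P := by
  rcases eq_or_lt_of_le (hk1.trans hk2) with h | h
  · have : k = k1 := by omega
    rw [this]; exact h1
  · have hpos : (0 : ℝ) < k2 - k1 := by
      have : (k1 : ℝ) < k2 := by exact_mod_cast h
      linarith
    have e1 : (k1 : ℝ) ≤ k := by exact_mod_cast hk1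
    have e2 : (k : ℝ) ≤ k2 := by exact_mod_cast hk2
    have := hc h1 h2 (a := ((k2 : ℝ) - k) / (k2 - k1)) (b := ((k : ℝ) - k1) / (k2 - k1))
      (div_nonneg (by linarith) hpos.le) (div_nonneg (by linarith) hpos.le)
      (by field_simp; ring)
    convert this using 1
    ext
    · simp [toR2]; field_simp; ring
    · simp [toR2]; field_simp; ring

lemma counts_of {P : Set (ℝ × ℝ)} (hcl : IsClosed P) (I B : Finset (ℤ × ℤ))
    (h1 : ∀ z, toR2 z ∈ P → z ∈ I ∨ z ∈ B) (h2 : ∀ z ∈ I, toR2 z ∈ interior P)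
    (h3 : ∀ z ∈ B, toR2 z ∈ P ∧ toR2 z ∉ interior P) :
    bcount P = B.card ∧ icount P = I.card := by
  constructor
  · rw [bcount, ← Set.ncard_coe_finset]
    congr 1
    ext z
    simp only [Set.mem_ofPred_eq, Finset.mem_coe, hcl.frontier_eq]
    constructor
    · rintro ⟨ha, hb⟩
      exact (h1 z ha).resolve_left (fun h => hb (h2 z h))
    · exact fun h => h3 z h
  · rw [icount, ← Set.ncard_coe_finset]
    congr 1
    ext z
    simp only [Set.mem_ofPred_eq, Finset.mem_coe]
    constructor
    · intro ha
      exact (h1 z (interior_subset ha)).resolve_right (fun h => (h3 z h).2 ha)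
    · exact fun h => h2 z h

/-- Packaging of the constructions. -/
lemma construct (S I B : Finset (ℤ × ℤ)) (A1 A2 A3 : ℤ × ℤ) (m1 : A1 ∈ S) (m2 : A2 ∈ S)
    (m3 : A3 ∈ S)
    (hd : (A2.1 - A1.1) * (A3.2 - A1.2) - (A2.2 - A1.2) * (A3.1 - A1.1) ≠ 0)
    (h1 : ∀ z, toR2 z ∈ convexHull ℝ (toR2 '' (S : Set (ℤ × ℤ))) → z ∈ I ∨ z ∈ B)
    (h2 : ∀ z ∈ I, (interior (convexHull ℝ (toR2 '' (S : Set (ℤ × ℤ))))).Nonempty →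
      toR2 z ∈ interior (convexHull ℝ (toR2 '' (S : Set (ℤ × ℤ)))))
    (h3 : ∀ z ∈ B, toR2 z ∈ convexHull ℝ (toR2 '' (S : Set (ℤ × ℤ))) ∧
      toR2 z ∉ interior (convexHull ℝ (toR2 '' (S : Set (ℤ × ℤ))))) :
    ∃ P : Set (ℝ × ℝ), IsLatticePolygon P ∧ bcount P = B.card ∧ icount P = I.card := by
  have hmem : ∀ z ∈ S, toR2 z ∈ convexHull ℝ (toR2 '' (S : Set (ℤ × ℤ))) :=
    fun z hz => subset_convexHull ℝ _ ⟨z, hz, rfl⟩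
  have htop : affineSpan ℝ (convexHull ℝ (toR2 '' (S : Set (ℤ × ℤ)))) = ⊤ := by
    apply affineSpan_top_of_three _ _ _ (hmem _ m1) (hmem _ m2) (hmem _ m3)
    simp only [toR2]
    exact_mod_cast hd
  have hne := ((convex_convexHull ℝ
    (toR2 '' (S : Set (ℤ × ℤ)))).interior_nonempty_iff_affineSpan_eq_top).mpr htop
  exact ⟨_, ⟨S, rfl, htop⟩, counts_of
    ((S.finite_toSet.image toR2).isCompact_convexHull (𝕜 := ℝ)).isClosed I B h1
    (fun z hz => h2 z hz hne) h3⟩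

/-- The lattice points `(k, y)` with `k` in an integer interval. -/
noncomputable def rowPts (y k1 k2 : ℤ) : Finset (ℤ × ℤ) := (Finset.Icc k1 k2).image (fun x => (x, y))

lemma mem_rowPts {y k1 k2 : ℤ} {z : ℤ × ℤ} :
    z ∈ rowPts y k1 k2 ↔ (k1 ≤ z.1 ∧ z.1 ≤ k2) ∧ z.2 = y := by
  simp only [rowPts, Finset.mem_image, Finset.mem_Icc]
  constructor
  · rintro ⟨x, hx, rfl⟩; exact ⟨hx, rfl⟩
  · rintro ⟨hx, rfl⟩; exact ⟨z.1, hx, rfl⟩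

lemma card_rowPts (y k1 k2 : ℤ) : (rowPts y k1 k2).card = (k2 + 1 - k1).toNat := by
  rw [rowPts, Finset.card_image_of_injective _ (fun a b h => by simpa using h), Int.card_Icc]

lemma construct_zero (b : ℕ) (hb : 3 ≤ b) :
    ∃ P : Set (ℝ × ℝ), IsLatticePolygon P ∧ bcount P = b ∧ icount P = 0 := by
  obtain ⟨m, hm⟩ : ∃ m : ℤ, m = (b : ℤ) - 2 := ⟨_, rfl⟩
  have hm1 : 1 ≤ m := by omega
  obtain ⟨P, hP, h1, h2⟩ := construct {(0, 0), (m, 0), (0, 1)} ∅ (insert (0, 1) (rowPts 0 0 m))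
    (0, 0) (m, 0) (0, 1) (by simp) (by simp) (by simp) (by simp; omega)
    (by
      rintro ⟨x, y⟩ hz
      have i1 := hullZ_le (-1) 0 0 (by simp; omega) hz
      have i2 := hullZ_le 0 (-1) 0 (by simp) hz
      have i3 := hullZ_le 0 1 1 (by simp) hz
      have i4 := hullZ_le 1 m m (by simp; omega) hz
      simp only at i1 i2 i3 i4
      have hy : y = 0 ∨ y = 1 := by omega
      right
      rw [Finset.mem_insert, mem_rowPts]
      rcases hy with rfl | rfl
      · right; simp; omega
      · left; simp; omega)
    (by simp)
    (by
      rintro ⟨x, y⟩ hz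
      rw [Finset.mem_insert, mem_rowPts] at hz
      have hmem : ∀ z ∈ ({(0, 0), (m, 0), (0, 1)} : Finset (ℤ × ℤ)), toR2 z ∈
        convexHull ℝ (toR2 '' (({(0, 0), (m, 0), (0, 1)} : Finset (ℤ × ℤ)) : Set (ℤ × ℤ))) :=
        fun z hz => subset_convexHull ℝ _ ⟨z, hz, rfl⟩
      rcases hz with h | ⟨hx, hy⟩
      · simp only [Prod.mk.injEq] at h
        obtain ⟨rfl, rfl⟩ := h
        exact ⟨hmem _ (by simp), hullZ_not_interior 0 1 1 (by simp) (by simp) (by simp)⟩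
      · simp only at hx hy
        subst hy
        exact ⟨row_memZ (convex_convexHull ℝ _) (hmem (0, 0) (by simp)) (hmem (m, 0) (by simp))
          hx.1 hx.2, hullZ_not_interior 0 (-1) 0 (by simp) (by simp) (by simp)⟩)
  refine ⟨P, hP, ?_, by simpa using h2⟩
  rw [h1, Finset.card_insert_of_notMem (by simp [mem_rowPts]), card_rowPts]
  omega

lemma construct_four (b i : ℕ) (hi : 1 ≤ i) (hb : 4 ≤ b) (hbi : b ≤ 2 * i + 6) :
    ∃ P : Set (ℝ × ℝ), IsLatticePolygon P ∧ bcount P = b ∧ icount P = i := by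
  obtain ⟨m, hm⟩ : ∃ m : ℤ, m = (b : ℤ) - 4 := ⟨_, rfl⟩
  obtain ⟨n, hn⟩ : ∃ n : ℤ, n = (i : ℤ) + 1 := ⟨_, rfl⟩
  have hm1 : 0 ≤ m := by omega
  have hmn : m ≤ 2 * n := by omega
  have hn2 : 2 ≤ n := by omega
  have hmem : ∀ z ∈ ({(0, 0), (m, 0), (n, 1), (0, 2)} : Finset (ℤ × ℤ)), toR2 z ∈
    convexHull ℝ (toR2 '' (({(0, 0), (m, 0), (n, 1), (0, 2)} : Finset (ℤ × ℤ)) : Set (ℤ × ℤ))) :=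
    fun z hz => subset_convexHull ℝ _ ⟨z, hz, rfl⟩
  have m00 := hmem (0, 0) (by simp)
  have mm0 := hmem (m, 0) (by simp)
  have mn1 := hmem (n, 1) (by simp)
  have m02 := hmem (0, 2) (by simp)
  have m01 := row_point (convex_convexHull ℝ _) m00 m02 (k := 1) (by simp) (by simp) (by simp)
  norm_num at m01
  obtain ⟨P, hP, h1, h2⟩ := construct {(0, 0), (m, 0), (n, 1), (0, 2)} (rowPts 1 1 (n - 1))
    (insert (0, 1) (insert (n, 1) (insert (0, 2) (rowPts 0 0 m))))
    (0, 0) (n, 1) (0, 2) (by simp) (by simp) (by simp) (by simp; omega)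
    (by
      rintro ⟨x, y⟩ hz
      have i1 := hullZ_le (-1) 0 0 (by simp; omega) hz
      have i2 := hullZ_le 0 (-1) 0 (by simp) hz
      have i3 := hullZ_le 0 1 2 (by simp) hz
      have i4 := hullZ_le 1 n (2 * n) (by simp; omega) hz
      have i5 := hullZ_le 1 (m - n) m (by simp; omega) hz
      simp only at i1 i2 i3 i4 i5
      have hy : y = 0 ∨ y = 1 ∨ y = 2 := by omega
      simp only [Finset.mem_insert, mem_rowPts, Prod.mk.injEq]
      rcases hy with rfl | rfl | rfl <;> omega)
    (by
      rintro ⟨x, y⟩ hz hne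
      rw [mem_rowPts] at hz
      obtain ⟨hx, hy⟩ := hz
      simp only at hx hy
      subst hy
      have := mem_interior_of_rows (x := x) (convex_convexHull ℝ _) hne
        (l := 0) (r := n) (y := 1) (by simpa using m01) (by simpa [toR2] using mn1)
        m00 m02 (by exact_mod_cast (by omega : 0 < x)) (by exact_mod_cast (by omega : x < n))
        (by simp) (by simp)
      simpa [toR2] using this)
    (by
      rintro ⟨x, y⟩ hz
      simp only [Finset.mem_insert, mem_rowPts, Prod.mk.injEq] at hz
      rcases hz with ⟨rfl, rfl⟩ | ⟨rfl, rfl⟩ | ⟨rfl, rfl⟩ | ⟨hx, rfl⟩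
      · exact ⟨by simpa [toR2] using m01,
          hullZ_not_interior (-1) 0 0 (by simp) (by simp; omega) (by simp)⟩
      · exact ⟨mn1, hullZ_not_interior 1 x (2 * x) (by simp) (by simp; omega) (by simp; omega)⟩
      · exact ⟨m02, hullZ_not_interior 0 1 2 (by simp) (by simp) (by simp)⟩
      · exact ⟨row_memZ (convex_convexHull ℝ _) m00 mm0 hx.1 hx.2,
          hullZ_not_interior 0 (-1) 0 (by simp) (by simp) (by simp)⟩)
  refine ⟨P, hP, ?_, ?_⟩
  · rw [h1, Finset.card_insert_of_notMem (by simp [mem_rowPts]; omega),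
      Finset.card_insert_of_notMem (by simp [mem_rowPts]),
      Finset.card_insert_of_notMem (by simp [mem_rowPts]), card_rowPts]
    omega
  · rw [h2, card_rowPts]; omega

lemma construct_three (i : ℕ) (hi : 1 ≤ i) :
    ∃ P : Set (ℝ × ℝ), IsLatticePolygon P ∧ bcount P = 3 ∧ icount P = i := by
  obtain ⟨n, hn⟩ : ∃ n : ℤ, n = (i : ℤ) + 1 := ⟨_, rfl⟩
  have hn2 : 2 ≤ n := by omega
  have hmem : ∀ z ∈ ({(0, 0), (n, 1), (1, 2)} : Finset (ℤ × ℤ)), toR2 z ∈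
    convexHull ℝ (toR2 '' (({(0, 0), (n, 1), (1, 2)} : Finset (ℤ × ℤ)) : Set (ℤ × ℤ))) :=
    fun z hz => subset_convexHull ℝ _ ⟨z, hz, rfl⟩
  have m00 := hmem (0, 0) (by simp)
  have mn1 := hmem (n, 1) (by simp)
  have m02 := hmem (1, 2) (by simp)
  have m01 := row_point (convex_convexHull ℝ _) m00 m02 (k := 1) (by simp) (by simp) (by simp)
  norm_num at m01
  obtain ⟨P, hP, h1, h2⟩ := construct {(0, 0), (n, 1), (1, 2)} (rowPts 1 1 (n - 1))
    {(0, 0), (n, 1), (1, 2)}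
    (0, 0) (n, 1) (1, 2) (by simp) (by simp) (by simp) (by simp; omega)
    (by
      rintro ⟨x, y⟩ hz
      have i1 := hullZ_le (-2) 1 0 (by simp; omega) hz
      have i2 := hullZ_le 0 (-1) 0 (by simp) hz
      have i3 := hullZ_le 0 1 2 (by simp) hz
      have i4 := hullZ_le 1 (-n) 0 (by simp; omega) hz
      have i5 := hullZ_le 1 (n - 1) (2 * n - 1) (by simp; omega) hz
      simp only at i1 i2 i3 i4 i5
      have hy : y = 0 ∨ y = 1 ∨ y = 2 := by omega
      simp only [Finset.mem_insert, mem_rowPts, Prod.mk.injEq, Finset.mem_singleton]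
      rcases hy with rfl | rfl | rfl <;> omega)
    (by
      rintro ⟨x, y⟩ hz hne
      rw [mem_rowPts] at hz
      obtain ⟨hx, hy⟩ := hz
      simp only at hx hy
      subst hy
      have hx1 : (1 : ℝ) ≤ x := by exact_mod_cast hx.1
      have := mem_interior_of_rows (x := x) (convex_convexHull ℝ _) hne
        (l := 1 / 2) (r := n) (y := 1) (by simpa [toR2] using m01) (by simpa [toR2] using mn1)
        m00 m02 (by linarith) (by exact_mod_cast (by omega : x < n))
        (by simp) (by simp)
      simpa [toR2] using this)
    (by
      rintro ⟨x, y⟩ hz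
      refine ⟨hmem _ hz, ?_⟩
      simp only [Finset.mem_insert, Prod.mk.injEq, Finset.mem_singleton] at hz
      rcases hz with ⟨rfl, rfl⟩ | ⟨rfl, rfl⟩ | ⟨rfl, rfl⟩
      · exact hullZ_not_interior 0 (-1) 0 (by simp) (by simp) (by simp)
      · exact hullZ_not_interior 1 (-x) 0 (by simp) (by simp; omega) (by simp)
      · exact hullZ_not_interior 0 1 2 (by simp) (by simp) (by simp))
  refine ⟨P, hP, ?_, ?_⟩
  · rw [h1, Finset.card_insert_of_notMem (by simp), Finset.card_insert_of_notMem (by simp)]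
    simp
  · rw [h2, card_rowPts]; omega

lemma construct_nine :
    ∃ P : Set (ℝ × ℝ), IsLatticePolygon P ∧ bcount P = 9 ∧ icount P = 1 := by
  have hmem : ∀ z ∈ ({(0, 0), (3, 0), (0, 3)} : Finset (ℤ × ℤ)), toR2 z ∈
    convexHull ℝ (toR2 '' (({(0, 0), (3, 0), (0, 3)} : Finset (ℤ × ℤ)) : Set (ℤ × ℤ))) :=
    fun z hz => subset_convexHull ℝ _ ⟨z, hz, rfl⟩
  have m00 := hmem (0, 0) (by simp)
  have m30 := hmem (3, 0) (by simp)
  have m03 := hmem (0, 3) (by simp)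
  have m01 := row_point (convex_convexHull ℝ _) m00 m03 (k := 1) (by simp) (by simp) (by simp)
  have m02 := row_point (convex_convexHull ℝ _) m00 m03 (k := 2) (by simp) (by norm_num) (by simp)
  have m21 := row_point (convex_convexHull ℝ _) m30 m03 (k := 1) (by simp) (by simp) (by simp)
  have m12 := row_point (convex_convexHull ℝ _) m30 m03 (k := 2) (by simp) (by norm_num) (by simp)
  norm_num at m01 m02 m21 m12
  obtain ⟨P, hP, h1, h2⟩ := construct {(0, 0), (3, 0), (0, 3)} {(1, 1)}
    {(0, 0), (1, 0), (2, 0), (3, 0), (0, 1), (2, 1), (0, 2), (1, 2), (0, 3)}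
    (0, 0) (3, 0) (0, 3) (by simp) (by simp) (by simp) (by simp)
    (by
      rintro ⟨x, y⟩ hz
      have i1 := hullZ_le (-1) 0 0 (by simp) hz
      have i2 := hullZ_le 0 (-1) 0 (by simp) hz
      have i3 := hullZ_le 1 1 3 (by simp) hz
      simp only at i1 i2 i3
      simp only [Finset.mem_insert, Prod.mk.injEq, Finset.mem_singleton]
      omega)
    (by
      intro z hz hne
      rw [Finset.mem_singleton] at hz
      subst hz
      have := mem_interior_of_rows (x := 1) (convex_convexHull ℝ _) hne
        (l := 0) (r := 2) (y := 1) (by simpa [toR2] using m01) (by simpa [toR2] using m21)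
        m00 m03 (by simp) (by simp) (by simp) (by simp)
      simpa [toR2] using this)
    (by
      rintro ⟨x, y⟩ hz
      simp only [Finset.mem_insert, Prod.mk.injEq, Finset.mem_singleton] at hz
      constructor
      · rcases hz with ⟨rfl, rfl⟩ | ⟨rfl, rfl⟩ | ⟨rfl, rfl⟩ | ⟨rfl, rfl⟩ | ⟨rfl, rfl⟩ | ⟨rfl, rfl⟩ |
          ⟨rfl, rfl⟩ | ⟨rfl, rfl⟩ | ⟨rfl, rfl⟩
        · exact m00
        · exact row_memZ (convex_convexHull ℝ _) m00 m30 (by simp) (by simp)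
        · exact row_memZ (convex_convexHull ℝ _) m00 m30 (by simp) (by simp)
        · exact m30
        · simpa [toR2] using m01
        · simpa [toR2] using m21
        · simpa [toR2] using m02
        · simpa [toR2] using m12
        · exact m03
      · have : y = 0 ∨ x = 0 ∨ x + y = 3 := by omega
        rcases this with h | h | h
        · exact hullZ_not_interior 0 (-1) 0 (by simp) (by simp) (by simp [h])
        · exact hullZ_not_interior (-1) 0 0 (by simp) (by simp) (by simp [h])
        · exact hullZ_not_interior 1 1 3 (by simp) (by simp) (by simp [h]))
  refine ⟨P, hP, ?_, ?_⟩
  · rw [h1]; rfl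
  · rw [h2]; rfl

/-- Classification of the pairs `(b(P), i(P))` over lattice polygons `P`. -/
theorem lattice_polygon_bi_classification (b i : ℕ) :
    (∃ P : Set (ℝ × ℝ), IsLatticePolygon P ∧ bcount P = b ∧ icount P = i) ↔
      (i = 0 ∧ 3 ≤ b) ∨ (1 ≤ i ∧ 3 ≤ b ∧ b ≤ 2 * i + 6) ∨ (b = 9 ∧ i = 1) := by
  constructor
  · rintro ⟨P, hP, rfl, rfl⟩
    have h3 := three_le_bcount hP
    rcases Nat.eq_zero_or_pos (icount P) with h | h
    · exact Or.inl ⟨h, h3⟩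
    · rcases upper_bound hP h with h' | h'
      · exact Or.inr (Or.inl ⟨h, h3, h'⟩)
      · exact Or.inr (Or.inr h')
  · rintro (⟨rfl, h⟩ | ⟨h1, h2, h3⟩ | ⟨rfl, rfl⟩)
    · exact construct_zero b h
    · rcases eq_or_lt_of_le h2 with h | h
      · subst h; exact construct_three i h1
      · exact construct_four b i h1 h h3
    · exact construct_nine
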